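/- Let N ≥ 2, let t_1,…,t_N > 0, p_1,…,p_N > 0, G_1,…,G_N > 0, α > 0, β ≥ 0. Define g(q) = ( ∑_{k=1}^N q_k t_k ) · ( α ∑_{k=1}^N p_k²G_k²/q_k + β ) on the open probability simplex D = { q ∈ ℝ^N : q_k > 0 for all k, ∑_{k=1}^N q_k = 1 }. Suppose q* ∈ D is a global minimizer of g on D, i.e., g(q*) ≤ g(q) for all q ∈ D. Then for any two indices i and j with t_i ≤ t_j and p_i G_i ≥ p_j G_j, it holds that q*_i ≥ q*_j. -/

import Mathlib

/-!
If `q i < q j` although `t i ≤ t j` and `p i * G i ≥ p j * G j`, exchanging `q i` and `q j`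
increases neither the expected round time nor the variance term, by the rearrangement inequality.
The first is linear in `q` and the second is strictly convex, so the midpoint of `q` and its
exchanged copy has no larger round time and a strictly smaller variance term; hence `q` is not a
minimizer of the product.
-/

open Finset Equiv

section OrderedRing

variable {R ι : Type*} [CommRing R] [LinearOrder R] [Fintype ι]

variable (R ι) in
/-- The open probability simplex `D`, the feasible set of sampling distributions. -/
def openSimplex : Set (ι → R) := {q | (∀ k, 0 < q k) ∧ ∑ k, q k = 1}

/-- The objective of Problem P3 with the penalty `x ↦ 1 / x` on the sampling probabilities replaced
by a function `φ`; the weight `a k` stands for `(p k * G k) ^ 2`. -/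
def samplingObjective (φ : R → R) (t a : ι → R) (α β : R) (q : ι → R) : R :=
  (∑ k, q k * t k) * (α * ∑ k, a k * φ (q k) + β)

theorem comp_perm_mem_openSimplex {q : ι → R} (hq : q ∈ openSimplex R ι) (σ : Perm ι) :
    q ∘ σ ∈ openSimplex R ι :=
  ⟨fun k => hq.1 (σ k), (Equiv.sum_comp σ q).trans hq.2⟩

variable [IsStrictOrderedRing R]

theorem convex_openSimplex : Convex R (openSimplex R ι) := by
  intro x hx y hy b c hb hc hbc
  refine ⟨fun k => convex_Ioi (0 : R) (hx.1 k) (hy.1 k) hb hc hbc, ?_⟩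
  simp only [Pi.add_apply, Pi.smul_apply, sum_add_distrib, ← smul_sum, hx.2, hy.2]
  simpa only [smul_eq_mul, mul_one] using hbc

theorem sum_comp_swap_mul_le_sum_mul [DecidableEq ι] {f g : ι → R} {i j : ι}
    (hf : f i ≤ f j) (hg : g i ≤ g j) :
    ∑ k, f (swap i j k) * g k ≤ ∑ k, f k * g k := by
  have hfg : MonovaryOn f g ({i, j} : Finset ι) := by
    intro x hx y hy hxy
    simp only [coe_insert, coe_singleton, Set.mem_insert_iff, Set.mem_singleton_iff] at hx hy
    rcases hx with rfl | rfl <;> rcases hy with rfl | rfl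
    exacts [le_rfl, hf, absurd hxy hg.not_gt, le_rfl]
  have hsupport : {k | swap i j k ≠ k} ⊆ ({i, j} : Finset ι) := fun k hk => by
    simpa using (swap_apply_ne_self_iff.1 hk).2
  rw [← sum_add_sum_compl {i, j}, ← sum_add_sum_compl {i, j} fun k => f k * g k]
  refine add_le_add (hfg.sum_comp_perm_mul_le_sum_mul hsupport) (sum_congr rfl fun k hk => ?_).le
  simp only [mem_compl, mem_insert, mem_singleton, not_or] at hk
  rw [swap_apply_of_ne_of_ne hk.1 hk.2]

theorem strictConvexOn_sum_mul_comp_apply {s : Set R} {φ : R → R} {a : ι → R}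
    (hφ : StrictConvexOn R s φ) (ha : ∀ k, 0 < a k) :
    StrictConvexOn R (Set.univ.pi fun _ => s) fun x : ι → R => ∑ k, a k * φ (x k) := by
  refine ⟨convex_pi fun _ _ => hφ.1, fun x hx y hy hxy b c hb hc hbc => ?_⟩
  obtain ⟨l, hl⟩ := Function.ne_iff.1 hxy
  calc ∑ k, a k * φ (b * x k + c * y k)
      < ∑ k, a k * (b * φ (x k) + c * φ (y k)) :=
        sum_lt_sum
          (fun k _ => mul_le_mul_of_nonneg_left
            (hφ.convexOn.2 (hx k trivial) (hy k trivial) hb.le hc.le hbc) (ha k).le)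
          ⟨l, mem_univ l, mul_lt_mul_of_pos_left
            (hφ.2 (hx l trivial) (hy l trivial) hl hb hc hbc) (ha l)⟩
    _ = b * ∑ k, a k * φ (x k) + c * ∑ k, a k * φ (y k) := by
        simp only [mul_sum, ← sum_add_distrib]
        exact sum_congr rfl fun k _ => by ring

variable {φ : R → R} {t a q m : ι → R} {α β : R} {i j : ι}

theorem sum_mul_le_of_mem_segment_comp_swap [DecidableEq ι] (hqij : q i ≤ q j) (htij : t i ≤ t j)
    (hm : m ∈ segment R q (q ∘ swap i j)) : ∑ k, m k * t k ≤ ∑ k, q k * t k :=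
  (((Fintype.linearCombination R t).convexOn convex_univ).le_on_segment trivial trivial
    hm).trans_eq (max_eq_left (sum_comp_swap_mul_le_sum_mul hqij htij))

theorem sum_mul_comp_lt_of_mem_openSegment_comp_swap [DecidableEq ι]
    (hφ : StrictConvexOn R (Set.Ioi 0) φ) (hφ_anti : AntitoneOn φ (Set.Ioi 0))
    (ha : ∀ k, 0 < a k) (hq : ∀ k, 0 < q k) (hqij : q i < q j) (haij : a j ≤ a i)
    (hm : m ∈ openSegment R q (q ∘ swap i j)) :
    ∑ k, a k * φ (m k) < ∑ k, a k * φ (q k) := by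
  have hne : q ≠ q ∘ swap i j := fun h => hqij.ne (by simpa using congrFun h i)
  have hswap : ∑ k, a k * φ (q (swap i j k)) ≤ ∑ k, a k * φ (q k) := by
    simpa only [Function.comp_apply, mul_comm, swap_comm] using
      sum_comp_swap_mul_le_sum_mul (f := φ ∘ q) (hφ_anti (hq i) (hq j) hqij.le) haij
  exact ((strictConvexOn_sum_mul_comp_apply hφ ha).lt_on_openSegment (fun k _ => hq k)
    (fun k _ => hq (swap i j k)) hne hm).trans_eq (max_eq_left hswap)

theorem samplingObjective_lt_of_sum_le_of_sum_lt [Nonempty ι] (hφ : ∀ x, 0 < x → 0 ≤ φ x)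
    (ht : ∀ k, 0 < t k) (ha : ∀ k, 0 ≤ a k) (hα : 0 < α) (hβ : 0 ≤ β)
    (hq : ∀ k, 0 < q k) (hm : ∀ k, 0 < m k)
    (hT : ∑ k, m k * t k ≤ ∑ k, q k * t k)
    (hS : ∑ k, a k * φ (m k) < ∑ k, a k * φ (q k)) :
    samplingObjective φ t a α β m < samplingObjective φ t a α β q := by
  have hT_pos : 0 < ∑ k, q k * t k := sum_pos (fun k _ => mul_pos (hq k) (ht k)) univ_nonempty
  have hS_nonneg : 0 ≤ ∑ k, a k * φ (m k) :=
    sum_nonneg fun k _ => mul_nonneg (ha k) (hφ _ (hm k))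
  have hS_lt : α * ∑ k, a k * φ (m k) + β < α * ∑ k, a k * φ (q k) + β := by gcongr
  exact mul_lt_mul' hT hS_lt (by positivity) hT_pos

end OrderedRing

theorem stmt_13_general {𝕜 ι : Type*} [Field 𝕜] [LinearOrder 𝕜] [IsStrictOrderedRing 𝕜]
    [Fintype ι] {φ : 𝕜 → 𝕜} {t a q : ι → 𝕜} {α β : 𝕜} {i j : ι}
    (hφ : StrictConvexOn 𝕜 (Set.Ioi 0) φ)
    (hφ_anti : AntitoneOn φ (Set.Ioi 0)) (hφ_nonneg : ∀ x, 0 < x → 0 ≤ φ x)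
    (ht : ∀ k, 0 < t k) (ha : ∀ k, 0 < a k) (hα : 0 < α) (hβ : 0 ≤ β)
    (hq : q ∈ openSimplex 𝕜 ι)
    (hmin : IsMinOn (samplingObjective φ t a α β) (openSimplex 𝕜 ι) q)
    (htij : t i ≤ t j) (haij : a j ≤ a i) : q j ≤ q i := by
  classical
  by_contra! hqij
  have : Nonempty ι := ⟨i⟩
  have hm := midpoint_mem_openSegment (𝕜 := 𝕜) q (q ∘ swap i j)
  have hmD := convex_openSimplex.openSegment_subset hq (comp_perm_mem_openSimplex hq _) hm
  have hT := sum_mul_le_of_mem_segment_comp_swap hqij.le htij (openSegment_subset_segment 𝕜 _ _ hm)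
  have hS := sum_mul_comp_lt_of_mem_openSegment_comp_swap hφ hφ_anti ha hq.1 hqij haij hm
  exact (hmin hmD).not_gt <| samplingObjective_lt_of_sum_le_of_sum_lt hφ_nonneg ht
    (fun k => (ha k).le) hα hβ hq.1 hmD.1 hT hS

theorem strictConvexOn_inv_Ioi : StrictConvexOn ℝ (Set.Ioi 0) fun x : ℝ => x⁻¹ := by
  simpa only [zpow_neg_one] using strictConvexOn_zpow (m := -1) (by decide) (by decide)

/-- Theorem 4: any global minimizer `q*` of the Problem P3 objective
`g(q) = (∑_k q_k t_k)(α ∑_k p_k²G_k²/q_k + β)` over the open probability simplex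
allocates probabilities monotonically: if `t_i ≤ t_j` and `p_iG_i ≥ p_jG_j`, then
`q*_i ≥ q*_j`. -/
theorem stmt_13 (N : ℕ) (hN : 2 ≤ N) (t p G : Fin N → ℝ)
    (ht : ∀ k, 0 < t k) (hp : ∀ k, 0 < p k) (hG : ∀ k, 0 < G k)
    (α β : ℝ) (hα : 0 < α) (hβ : 0 ≤ β)
    (qs : Fin N → ℝ) (hqs : ∀ k, 0 < qs k) (hqssum : ∑ k, qs k = 1)
    (hmin : ∀ q : Fin N → ℝ, (∀ k, 0 < q k) → (∑ k, q k) = 1 →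
      (∑ k, qs k * t k) * (α * ∑ k, p k ^ 2 * G k ^ 2 / qs k + β)
        ≤ (∑ k, q k * t k) * (α * ∑ k, p k ^ 2 * G k ^ 2 / q k + β))
    (i j : Fin N) (htij : t i ≤ t j) (hpg : p i * G i ≥ p j * G j) :
    qs i ≥ qs j :=
  stmt_13_general (a := fun k => p k ^ 2 * G k ^ 2) strictConvexOn_inv_Ioi inv_antitoneOn_Ioi
    (fun _ hx => (inv_pos.2 hx).le) ht (fun k => mul_pos (pow_pos (hp k) 2) (pow_pos (hG k) 2))
    hα hβ ⟨hqs, hqssum⟩ (fun q hq => hmin q hq.1 hq.2) htij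
    (by simpa only [mul_pow] using pow_le_pow_left₀ (mul_pos (hp j) (hG j)).le hpg 2)
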